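/- Let ν be the standard Gaussian on ℝ^d and B₁, ..., B_K measurable cells partitioning ℝ^d with ν(B_i) = 1/K for all i, K ≥ 5. Then E_{z~ν}[dist(z, complement of cell containing z)] ≤ log(4π log K)/√(2 log K). -/

import Mathlib

open Real Set MeasureTheory ProbabilityTheory

/-- The standard normal cumulative distribution function. -/
noncomputable def Phi (x : ℝ) : ℝ :=
  (Real.sqrt (2 * π))⁻¹ * ∫ u in Set.Iic x, Real.exp (-u ^ 2 / 2)

/-- The inverse of the standard normal cdf. -/
noncomputable def PhiInv : ℝ → ℝ := Function.invFun Phi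

/-- The standard Gaussian measure `N(0, I_d)` on `ℝ^d`. -/
noncomputable def stdGaussian (d : ℕ) : Measure (Fin d → ℝ) :=
  Measure.pi fun _ => gaussianReal 0 1

/-- The Euclidean (ℓ₂) norm on `ℝ^d`. -/
noncomputable def l2 {d : ℕ} (z : Fin d → ℝ) : ℝ := Real.sqrt (∑ i, z i ^ 2)

/-- The ℓ₂ distance from a point to a set. -/
noncomputable def distSet {d : ℕ} (z : Fin d → ℝ) (A : Set (Fin d → ℝ)) : ℝ :=
  sInf {t | ∃ z' ∈ A, t = l2 (z - z')}

/-- Thickening a nonempty measurable subset of `ℝ` by an open interval `(-c, c)` adds at least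
`2c` to its length. -/
theorem volume_add_le_of_thickening_subset {A D : Set ℝ} (hA : MeasurableSet A)
    (hne : A.Nonempty) {c : ℝ} (hc : 0 < c) (hD : ∀ x ∈ A, ∀ w, |w| < c → x + w ∈ D) :
    volume A + ENNReal.ofReal (2 * c) ≤ volume D := by
  obtain ⟨x₀, hx₀⟩ := hne
  have key : ∀ L ⊆ A, IsCompact L → volume L + ENNReal.ofReal (2 * c) ≤ volume D := by
    intro L hLA hL
    have hL' : IsCompact (insert x₀ L) := hL.insert x₀
    have hsub : insert x₀ L ⊆ A := Set.insert_subset hx₀ hLA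
    have hne : (insert x₀ L).Nonempty := Set.insert_nonempty _ _
    set L' := insert x₀ L
    have ha := hL'.sInf_mem hne
    have hb := hL'.sSup_mem hne
    set a := sInf L'
    set b := sSup L'
    have hlow : ∀ y ∈ L', a ≤ y := fun y hy => csInf_le hL'.bddBelow hy
    have hupp : ∀ y ∈ L', y ≤ b := fun y hy => le_csSup hL'.bddAbove hy
    have hab : a ≤ b := hlow b hb
    have hunion : (Ioo (a - c) a ∪ L') ∪ Ioo b (b + c) ⊆ D := by
      rintro y ((⟨h1, h2⟩ | hy) | ⟨h1, h2⟩)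
      · have := hD a (hsub ha) (y - a) (by rw [abs_lt]; constructor <;> linarith)
        simpa using this
      · simpa using hD y (hsub hy) 0 (by simpa using hc)
      · have := hD b (hsub hb) (y - b) (by rw [abs_lt]; constructor <;> linarith)
        simpa using this
    have hd1 : Disjoint (Ioo (a - c) a) L' :=
      Set.disjoint_left.2 fun y hy hy' => absurd (hlow y hy') (not_le.2 hy.2)
    have hd2 : Disjoint (Ioo (a - c) a ∪ L') (Ioo b (b + c)) := by
      refine Set.disjoint_left.2 ?_
      rintro y (hy | hy) hy'
      · linarith [hy.2, hy'.1]
      · linarith [hupp y hy, hy'.1]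
    calc volume L + ENNReal.ofReal (2 * c)
        ≤ volume L' + ENNReal.ofReal (2 * c) := by
          gcongr
          exact Set.subset_insert _ _
      _ = volume ((Ioo (a - c) a ∪ L') ∪ Ioo b (b + c)) := by
          rw [measure_union hd2 measurableSet_Ioo, measure_union hd1 hL'.measurableSet,
            Real.volume_Ioo, Real.volume_Ioo, two_mul, ENNReal.ofReal_add hc.le hc.le]
          ring_nf
      _ ≤ volume D := measure_mono hunion
  rw [hA.measure_eq_iSup_isCompact, ENNReal.iSup_add]
  refine iSup_le fun L => ?_
  by_cases hLA : L ⊆ A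
  · by_cases hL : IsCompact L
    · simpa [hLA, hL] using key L hLA hL
    · simpa [hL] using le_trans le_add_self (key ∅ (Set.empty_subset _) isCompact_empty)
  · simpa [hLA] using le_trans le_add_self (key ∅ (Set.empty_subset _) isCompact_empty)

theorem setOf_lt_exp_neg_sq_half {s : ℝ} (hs : s ∈ Ioo (0 : ℝ) 1) :
    {w : ℝ | s < Real.exp (-w ^ 2 / 2)} = {w : ℝ | |w| < √(-2 * Real.log s)} := by
  ext w
  simp only [Set.mem_ofPred_eq]
  rw [← Real.log_lt_iff_lt_exp hs.1, Real.lt_sqrt (abs_nonneg w), sq_abs]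
  constructor <;> intro h <;> linarith

open scoped Pointwise in
/-- A one-dimensional Prékopa–Leindler inequality in arithmetic-mean form, for a function with
essential supremum one and a Gaussian weight. -/
theorem lintegral_add_le_of_gaussian_interpolation {φ h : ℝ → ℝ} (hφm : Measurable φ)
    (hhm : Measurable h) (hφ0 : ∀ x, 0 ≤ φ x) (hφ1 : ∀ x, φ x ≤ 1)
    (hsup : ∀ s < 1, ∃ x, s < φ x) {l : ℝ} (hl0 : 0 < l) (hl1 : l < 1)
    (hh0 : ∀ x, 0 ≤ h x)
    (hle : ∀ x w, φ x ^ l * Real.exp (-w ^ 2 / 2) ^ (1 - l) ≤ h (l * x + (1 - l) * w)) :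
    ENNReal.ofReal l * (∫⁻ x, ENNReal.ofReal (φ x)) +
      ENNReal.ofReal (1 - l) * ∫⁻ w : ℝ, ENNReal.ofReal (Real.exp (-w ^ 2 / 2)) ≤
      ∫⁻ x, ENNReal.ofReal (h x) := by
  have hgm : Measurable fun w : ℝ => Real.exp (-w ^ 2 / 2) := by fun_prop
  have hg1 : ∀ w : ℝ, Real.exp (-w ^ 2 / 2) ≤ 1 := fun w =>
    Real.exp_le_one_iff.2 (by nlinarith [sq_nonneg w])
  have cake : ∀ ψ : ℝ → ℝ, Measurable ψ → (∀ x, 0 ≤ ψ x) → (∀ x, ψ x ≤ 1) →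
      ∫⁻ x, ENNReal.ofReal (ψ x) = ∫⁻ s in Ioo (0 : ℝ) 1, volume {x | s < ψ x} := by
    intro ψ hm h0 h1
    rw [lintegral_eq_lintegral_meas_lt _ (Filter.Eventually.of_forall h0) hm.aemeasurable]
    refine (lintegral_inter_add_sdiff _ _ (measurableSet_Iio (a := (1 : ℝ)))).symm.trans ?_
    rw [Set.Ioi_inter_Iio]
    have : ∫⁻ s in Ioi (0 : ℝ) \ Iio 1, volume {x | s < ψ x} = 0 := by
      rw [setLIntegral_congr_fun (g := fun _ => 0) (measurableSet_Ioi.diff measurableSet_Iio)]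
      · simp
      · rintro s ⟨_, hs⟩
        have : {x | s < ψ x} = ∅ := by
          ext x
          simp only [Set.mem_Iio, not_lt] at hs
          simpa using (h1 x).trans hs
        simp [this]
    rw [this, add_zero]
  have antim : ∀ ψ : ℝ → ℝ, Measurable fun s : ℝ => volume {x | s < ψ x} := fun ψ =>
    Antitone.measurable fun a b hab => measure_mono fun x hx => lt_of_le_of_lt hab hx
  rw [cake φ hφm hφ0 hφ1, cake _ hgm (fun w => (Real.exp_pos _).le) hg1,
    lintegral_eq_lintegral_meas_lt _ (Filter.Eventually.of_forall hh0) hhm.aemeasurable,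
    ← lintegral_const_mul _ (antim _), ← lintegral_const_mul _ (antim _),
    ← lintegral_add_left ((antim _).const_mul _)]
  refine le_trans (setLIntegral_mono' measurableSet_Ioo fun s hs => ?_)
    (lintegral_mono_set Set.Ioo_subset_Ioi_self)
  have hl1' : 0 < 1 - l := sub_pos.2 hl1
  have hc : 0 < √(-2 * Real.log s) := Real.sqrt_pos.2 (by linarith [Real.log_neg hs.1 hs.2])
  rw [setOf_lt_exp_neg_sq_half hs]
  set c := √(-2 * Real.log s) with hcdef
  have hvol : volume {w : ℝ | |w| < c} = ENNReal.ofReal (2 * c) := by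
    have : {w : ℝ | |w| < c} = Ioo (-c) c := by
      ext w
      simp [abs_lt]
    rw [this, Real.volume_Ioo]
    ring_nf
  have hscale : volume (l • {x | s < φ x}) = ENNReal.ofReal l * volume {x | s < φ x} := by
    rw [Measure.addHaar_smul]
    simp [abs_of_pos hl0]
  rw [hvol, ← hscale, ← ENNReal.ofReal_mul hl1'.le]
  have hms : MeasurableSet {x | s < φ x} := measurableSet_lt measurable_const hφm
  have := volume_add_le_of_thickening_subset (A := l • {x | s < φ x}) (D := {x | s < h x})
    (hms.const_smul₀ l) (Set.Nonempty.smul_set (hsup s hs.2)) (c := (1 - l) * c)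
    (by positivity) ?_
  · convert this using 3
    ring
  · rintro _ ⟨x, hx, rfl⟩ w hw
    have hw' : |w / (1 - l)| < c := by
      rw [abs_div, abs_of_pos hl1', div_lt_iff₀ hl1']
      linarith
    have hw'' : s < Real.exp (-(w / (1 - l)) ^ 2 / 2) := by
      have : w / (1 - l) ∈ {w : ℝ | |w| < c} := hw'
      rwa [hcdef, ← setOf_lt_exp_neg_sq_half hs] at this
    have h1 := hle x (w / (1 - l))
    rw [mul_div_cancel₀ _ hl1'.ne'] at h1
    refine lt_of_lt_of_le ?_ h1
    calc s = s ^ l * s ^ (1 - l) := by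
          rw [← Real.rpow_add hs.1]
          simp
      _ < φ x ^ l * Real.exp (-(w / (1 - l)) ^ 2 / 2) ^ (1 - l) := by
          have hs0 := hs.1
          have hx' : s < φ x := hx
          gcongr

theorem lintegral_exp_neg_sq_half :
    ∫⁻ w : ℝ, ENNReal.ofReal (Real.exp (-w ^ 2 / 2)) = ENNReal.ofReal √(2 * π) := by
  have heq : (fun w : ℝ => Real.exp (-w ^ 2 / 2)) = fun w => Real.exp (-(1 / 2) * w ^ 2) := by
    ext w
    ring_nf
  rw [← ofReal_integral_eq_lintegral_ofReal (heq ▸ integrable_exp_neg_mul_sq (by norm_num))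
    (Filter.Eventually.of_forall fun w => (Real.exp_pos _).le), heq, integral_gaussian]
  congr 2
  ring

theorem ENNReal.rpow_mul_rpow_le_add {l : ℝ} (hl0 : 0 < l) (hl1 : l < 1) (a b : ENNReal) :
    a ^ l * b ^ (1 - l) ≤ ENNReal.ofReal l * a + ENNReal.ofReal (1 - l) * b := by
  have hl1' : 0 < 1 - l := sub_pos.2 hl1
  by_cases ha : a = ⊤
  · have : ENNReal.ofReal l * a = ⊤ := by simp [ha, ENNReal.mul_top, hl0]
    simp [this]
  by_cases hb : b = ⊤
  · have : ENNReal.ofReal (1 - l) * b = ⊤ := by simp [hb, ENNReal.mul_top, hl1]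
    simp [this]
  lift a to NNReal using ha
  lift b to NNReal using hb
  have := NNReal.geom_mean_le_arith_mean2_weighted l.toNNReal (1 - l).toNNReal a b
    (by rw [← Real.toNNReal_add hl0.le hl1'.le]; simp)
  rw [Real.coe_toNNReal _ hl0.le, Real.coe_toNNReal _ hl1'.le] at this
  rw [← ENNReal.coe_rpow_of_nonneg _ hl0.le, ← ENNReal.coe_rpow_of_nonneg _ hl1'.le]
  unfold ENNReal.ofReal
  exact_mod_cast this

/-- A one-dimensional Prékopa–Leindler inequality where one of the functions is Gaussian. -/
theorem lintegral_rpow_mul_le_of_gaussian_interpolation {f h : ℝ → ℝ} (hfm : Measurable f)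
    (hhm : Measurable h) (hf0 : ∀ x, 0 ≤ f x) (hfb : BddAbove (Set.range f))
    {l : ℝ} (hl0 : 0 < l) (hl1 : l < 1) (hh0 : ∀ x, 0 ≤ h x)
    (hle : ∀ x w, f x ^ l * Real.exp (-w ^ 2 / 2) ^ (1 - l) ≤ h (l * x + (1 - l) * w)) :
    (∫⁻ x, ENNReal.ofReal (f x)) ^ l * ENNReal.ofReal √(2 * π) ^ (1 - l) ≤
      ∫⁻ x, ENNReal.ofReal (h x) := by
  set S := ⨆ x, f x
  have hfS : ∀ x, f x ≤ S := fun x => le_ciSup hfb x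
  rcases ((hf0 0).trans (hfS 0)).eq_or_lt with hS | hS
  · have : ∀ x, f x = 0 := fun x => le_antisymm (hS ▸ hfS x) (hf0 x)
    simp [this, hl0]
  have hSl : 0 < S ^ l := Real.rpow_pos_of_pos hS l
  have key := lintegral_add_le_of_gaussian_interpolation (φ := fun x => f x / S)
    (h := fun x => h x / S ^ l) (hfm.div_const S) (hhm.div_const _)
    (fun x => div_nonneg (hf0 x) hS.le) (fun x => (div_le_one hS).2 (hfS x)) ?_ hl0 hl1
    (fun x => div_nonneg (hh0 x) hSl.le) ?_
  · have hI : ∀ (u : ℝ → ℝ) (c : ℝ), Measurable u → 0 < c →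
        ∫⁻ x, ENNReal.ofReal (u x / c) = ENNReal.ofReal c⁻¹ * ∫⁻ x, ENNReal.ofReal (u x) := by
      intro u c hu hc
      rw [← lintegral_const_mul _ hu.ennreal_ofReal]
      refine lintegral_congr fun x => ?_
      rw [← ENNReal.ofReal_mul (inv_nonneg.2 hc.le), div_eq_inv_mul]
    have h2 := (ENNReal.rpow_mul_rpow_le_add hl0 hl1 _ _).trans key
    rw [lintegral_exp_neg_sq_half, hI f S hfm hS, hI h _ hhm hSl,
      ENNReal.mul_rpow_of_nonneg _ _ hl0.le,
      ENNReal.ofReal_rpow_of_pos (inv_pos.2 hS), Real.inv_rpow hS.le, mul_assoc] at h2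
    refine (ENNReal.mul_le_mul_iff_right ?_ ?_).1 h2
    · simpa using hSl
    · exact ENNReal.ofReal_ne_top
  · intro s hs
    obtain ⟨x, hx⟩ := exists_lt_of_lt_ciSup (show s * S < ⨆ x, f x by
      change s * S < S
      nlinarith)
    exact ⟨x, (lt_div_iff₀ hS).2 hx⟩
  · intro x w
    rw [Real.div_rpow (hf0 x) hS.le, div_mul_eq_mul_div]
    gcongr
    exact hle x w

theorem lintegral_gaussianReal_zero_one {u : ℝ → ENNReal} (hu : Measurable u) :
    ∫⁻ x, u x ∂(gaussianReal 0 1) =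
      ENNReal.ofReal (√(2 * π))⁻¹ * ∫⁻ x, u x * ENNReal.ofReal (Real.exp (-x ^ 2 / 2)) := by
  rw [gaussianReal_of_var_ne_zero _ one_ne_zero,
    lintegral_withDensity_eq_lintegral_mul _ (measurable_gaussianPDF 0 1) hu,
    ← lintegral_const_mul _ (by fun_prop)]
  refine lintegral_congr fun x => ?_
  simp only [Pi.mul_apply, gaussianPDF, gaussianPDFReal]
  rw [ENNReal.ofReal_mul (by positivity)]
  simp only [NNReal.coe_one, mul_one, sub_zero]
  ring

/-- Hypercontractivity of the infimal convolution for the standard Gaussian measure on `ℝ`. -/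
theorem lintegral_rpow_gaussianReal_le {F G : ℝ → ENNReal} (hF : Measurable F) (hG : Measurable G)
    {M : ENNReal} (hM : M ≠ ⊤) (hFM : ∀ x, F x ≤ M) (hGM : ∀ x, G x ≤ M) {t : ℝ} (ht : 0 < t)
    (hle : ∀ x y, G x ≤ F y * ENNReal.ofReal (Real.exp ((x - y) ^ 2 / (2 * t)))) :
    ∫⁻ x, G x ^ (1 + t) ∂(gaussianReal 0 1) ≤ (∫⁻ x, F x ∂(gaussianReal 0 1)) ^ (1 + t) := by
  have ht1 : 0 < 1 + t := by linarith
  have hFt : ∀ x, F x ≠ ⊤ := fun x => ne_top_of_le_ne_top hM (hFM x)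
  have hGt : ∀ x, G x ≠ ⊤ := fun x => ne_top_of_le_ne_top hM (hGM x)
  set c := √(2 * π)
  have hc : 0 < c := by positivity
  set l := 1 / (1 + t) with hl
  have hl0 : 0 < l := by positivity
  have hl1 : l < 1 := by
    rw [hl, div_lt_one ht1]
    linarith
  have hlt : (1 + t) * l = 1 := by
    rw [hl]
    field_simp
  have hexp : ∀ x : ℝ, Real.exp (-x ^ 2 / 2) ≤ 1 := fun x =>
    Real.exp_le_one_iff.2 (by nlinarith [sq_nonneg x])
  have key := lintegral_rpow_mul_le_of_gaussian_interpolation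
    (f := fun x => (G x).toReal ^ (1 + t) * Real.exp (-x ^ 2 / 2))
    (h := fun x => (F x).toReal * Real.exp (-x ^ 2 / 2))
    (by fun_prop) (by fun_prop) (fun x => by positivity) ?_ hl0 hl1 (fun x => by positivity) ?_
  · have hf : ∀ x, ENNReal.ofReal ((G x).toReal ^ (1 + t) * Real.exp (-x ^ 2 / 2)) =
        G x ^ (1 + t) * ENNReal.ofReal (Real.exp (-x ^ 2 / 2)) := fun x => by
      rw [ENNReal.ofReal_mul (by positivity), ← ENNReal.ofReal_rpow_of_nonneg (by positivity)
        ht1.le, ENNReal.ofReal_toReal (hGt x)]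
    have hh : ∀ x, ENNReal.ofReal ((F x).toReal * Real.exp (-x ^ 2 / 2)) =
        F x * ENNReal.ofReal (Real.exp (-x ^ 2 / 2)) := fun x => by
      rw [ENNReal.ofReal_mul (by positivity), ENNReal.ofReal_toReal (hFt x)]
    simp only [hf, hh] at key
    rw [lintegral_gaussianReal_zero_one (hG.pow_const _), lintegral_gaussianReal_zero_one hF]
    set I := ∫⁻ x, G x ^ (1 + t) * ENNReal.ofReal (Real.exp (-x ^ 2 / 2))
    calc ENNReal.ofReal c⁻¹ * I
        = (ENNReal.ofReal c⁻¹ * (I ^ l * ENNReal.ofReal c ^ (1 - l))) ^ (1 + t) := by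
          rw [ENNReal.ofReal_rpow_of_pos hc, mul_left_comm,
            ← ENNReal.ofReal_mul (inv_nonneg.2 hc.le),
            ENNReal.mul_rpow_of_nonneg _ _ ht1.le, ← ENNReal.rpow_mul, mul_comm l, hlt,
            ENNReal.rpow_one, mul_comm, ENNReal.ofReal_rpow_of_nonneg (by positivity) ht1.le]
          congr 2
          rw [← Real.rpow_neg_one, ← Real.rpow_add hc, ← Real.rpow_mul hc.le]
          congr 1
          linarith
      _ ≤ _ := by gcongr
  · refine ⟨M.toReal ^ (1 + t), ?_⟩
    rintro _ ⟨x, rfl⟩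
    have h1 : (G x).toReal ≤ M.toReal := ENNReal.toReal_mono hM (hGM x)
    calc (G x).toReal ^ (1 + t) * Real.exp (-x ^ 2 / 2)
        ≤ M.toReal ^ (1 + t) * 1 := by
          gcongr
          exact hexp x
      _ = _ := mul_one _
  · intro x w
    set y := l * x + (1 - l) * w with hy
    have h1 : (G x).toReal ≤ (F y).toReal * Real.exp ((x - y) ^ 2 / (2 * t)) := by
      have := ENNReal.toReal_mono (ENNReal.mul_ne_top (hFt y) ENNReal.ofReal_ne_top) (hle x y)
      rwa [ENNReal.toReal_mul, ENNReal.toReal_ofReal (Real.exp_pos _).le] at this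
    rw [Real.mul_rpow (by positivity) (Real.exp_pos _).le, ← Real.rpow_mul (by positivity), hlt,
      Real.rpow_one, ← Real.exp_mul, ← Real.exp_mul, mul_assoc, ← Real.exp_add]
    refine (mul_le_mul_of_nonneg_right h1 (Real.exp_pos _).le).trans_eq ?_
    rw [mul_assoc, ← Real.exp_add]
    congr 2
    rw [hy, hl]
    field_simp
    ring

instance isProbabilityMeasure_pi_gaussianReal (d : ℕ) :
    IsProbabilityMeasure (_root_.stdGaussian d) := by
  unfold _root_.stdGaussian
  infer_instance

/-- Hypercontractivity of the infimal convolution for the standard Gaussian measure on `ℝ^d`. -/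
theorem lintegral_rpow_stdGaussian_le {t : ℝ} (ht : 0 < t) {M : ENNReal} (hM : M ≠ ⊤) (d : ℕ) :
    ∀ {F G : (Fin d → ℝ) → ENNReal}, Measurable F → Measurable G →
      (∀ x, F x ≤ M) → (∀ x, G x ≤ M) →
      (∀ x y, G x ≤ F y * ENNReal.ofReal (Real.exp ((∑ i, (x i - y i) ^ 2) / (2 * t)))) →
      ∫⁻ x, G x ^ (1 + t) ∂(_root_.stdGaussian d) ≤
        (∫⁻ x, F x ∂(_root_.stdGaussian d)) ^ (1 + t) := by
  have ht1 : 0 < 1 + t := by linarith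
  induction d with
  | zero =>
    intro F G hF hG hFM hGM hle
    have h0 : ∀ x : Fin 0 → ℝ, x = default := fun x => Subsingleton.elim _ _
    have hG' : ∀ x, G x ≤ F default := fun x => by simpa [h0 x] using hle x default
    have hF' : ∀ x, F x = F default := fun x => by rw [h0 x]
    calc ∫⁻ x, G x ^ (1 + t) ∂(_root_.stdGaussian 0)
        ≤ ∫⁻ x, F default ^ (1 + t) ∂(_root_.stdGaussian 0) :=
          lintegral_mono fun x => ENNReal.rpow_le_rpow (hG' x) ht1.le
      _ = (∫⁻ x, F x ∂(_root_.stdGaussian 0)) ^ (1 + t) := by simp [hF']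
  | succ d ih =>
    intro F G hF hG hFM hGM hle
    have hmp := (measurePreserving_piFinSuccAbove (fun _ : Fin (d + 1) => gaussianReal 0 1) 0).symm
    have split : ∀ u : (Fin (d + 1) → ℝ) → ENNReal, Measurable u →
        ∫⁻ x, u x ∂(_root_.stdGaussian (d + 1)) =
          ∫⁻ a, ∫⁻ x, u (Fin.cons a x) ∂(_root_.stdGaussian d) ∂(gaussianReal 0 1) := by
      intro u hu
      have h1 := hmp.lintegral_comp hu
      rw [lintegral_prod _ (by fun_prop)] at h1
      unfold _root_.stdGaussian
      rw [← h1]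
      simp [MeasurableEquiv.piFinSuccAbove, Fin.insertNthEquiv]
    have hcons : Measurable fun p : ℝ × (Fin d → ℝ) => (Fin.cons p.1 p.2 : Fin (d + 1) → ℝ) := by
      refine measurable_pi_iff.2 fun i => ?_
      refine Fin.cases ?_ (fun j => ?_) i
      · simpa using measurable_fst
      · simpa [Function.comp_def] using (measurable_pi_apply j).comp measurable_snd
    have hcons' : ∀ a : ℝ, Measurable fun x : Fin d → ℝ => (Fin.cons a x : Fin (d + 1) → ℝ) :=
      fun a => hcons.comp measurable_prodMk_left
    set G' : ℝ → ENNReal := fun a =>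
      (∫⁻ x, G (Fin.cons a x) ^ (1 + t) ∂(_root_.stdGaussian d)) ^ (1 / (1 + t)) with hG'
    set F' : ℝ → ENNReal := fun a => ∫⁻ x, F (Fin.cons a x) ∂(_root_.stdGaussian d)
    have hG'm : Measurable G' :=
      (Measurable.lintegral_prod_right'
        (f := fun p : ℝ × (Fin d → ℝ) => G (Fin.cons p.1 p.2) ^ (1 + t))
        ((hG.comp hcons).pow_const _)).pow_const _
    have hF'm : Measurable F' :=
      Measurable.lintegral_prod_right'
        (f := fun p : ℝ × (Fin d → ℝ) => F (Fin.cons p.1 p.2)) (hF.comp hcons)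
    have hpow : ∀ a : ENNReal, (a ^ (1 / (1 + t))) ^ (1 + t) = a := fun a => by
      rw [← ENNReal.rpow_mul, one_div_mul_cancel ht1.ne', ENNReal.rpow_one]
    have hpow' : ∀ a : ENNReal, (a ^ (1 + t)) ^ (1 / (1 + t)) = a := fun a => by
      rw [← ENNReal.rpow_mul, mul_one_div_cancel ht1.ne', ENNReal.rpow_one]
    rw [split _ (hG.pow_const _), split _ hF]
    have hGG : ∀ a, ∫⁻ x, G (Fin.cons a x) ^ (1 + t) ∂(_root_.stdGaussian d) = G' a ^ (1 + t) :=
      fun a => (hpow _).symm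
    simp only [hGG]
    refine lintegral_rpow_gaussianReal_le hF'm hG'm hM (fun a => ?_) (fun a => ?_) ht
      fun a b => ?_
    · calc F' a ≤ ∫⁻ x, M ∂(_root_.stdGaussian d) := lintegral_mono fun x => hFM _
        _ = M := by simp
    · calc G' a ≤ (∫⁻ x, M ^ (1 + t) ∂(_root_.stdGaussian d)) ^ (1 / (1 + t)) :=
            ENNReal.rpow_le_rpow (lintegral_mono fun x => ENNReal.rpow_le_rpow (hGM _) ht1.le)
              (by positivity)
        _ = M := by
          rw [lintegral_const, measure_univ, mul_one, hpow']
    · set e := ENNReal.ofReal (Real.exp ((a - b) ^ 2 / (2 * t))) with he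
      have he0 : 1 ≤ e := by
        rw [he, ← ENNReal.ofReal_one]
        exact ENNReal.ofReal_le_ofReal (Real.one_le_exp (by positivity))
      have he0' : e ≠ 0 := (zero_lt_one.trans_le he0).ne'
      have het : e ≠ ⊤ := ENNReal.ofReal_ne_top
      have := ih (F := fun x => F (Fin.cons b x)) (G := fun x => G (Fin.cons a x) / e)
        (hF.comp (hcons' b)) ((hG.comp (hcons' a)).div_const e) (fun x => hFM _)
        (fun x => (ENNReal.div_le_of_le_mul (by
          calc G (Fin.cons a x) ≤ M * 1 := by simpa using hGM _
            _ ≤ M * e := by gcongr))) (fun x y => ?_)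
      · simp only [div_eq_mul_inv, ENNReal.mul_rpow_of_nonneg _ _ ht1.le] at this
        have hm : Measurable fun x => G (Fin.cons a x) ^ (1 + t) :=
          (hG.comp (hcons' a)).pow_const _
        rw [lintegral_mul_const _ hm, hGG,
          ← ENNReal.mul_rpow_of_nonneg _ _ ht1.le, ENNReal.rpow_le_rpow_iff ht1,
          ← div_eq_mul_inv] at this
        exact (ENNReal.div_le_iff he0' het).1 this
      · refine ENNReal.div_le_of_le_mul ?_
        have h := hle (Fin.cons a x) (Fin.cons b y)
        rw [Fin.sum_univ_succ] at h
        simp only [Fin.cons_zero, Fin.cons_succ] at h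
        rwa [add_comm ((a - b) ^ 2), add_div, Real.exp_add, ENNReal.ofReal_mul (Real.exp_pos _).le,
          ← mul_assoc] at h

theorem mul_log_le_of_forall_rpow_le {n c k : ℝ} (hn : 0 ≤ n) (hc : 0 < c) (hk : 2 < k)
    (h : ∀ t > 0, c ^ (-(1 / (1 + t))) * n ^ (k / 2) ≤
      c⁻¹ * (n + k * t) ^ (k / 2) + (k * t) ^ (k / 2)) :
    n * Real.log c ≤ k ^ 2 / 2 := by
  rcases hn.eq_or_lt with rfl | hn
  · rw [zero_mul]
    positivity
  have hq : 1 < k / 2 := by linarith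
  set q := k / 2 with hqk
  set φ : ℝ → ℝ := fun t =>
    c⁻¹ * (n + k * t) ^ q + (k * t) ^ q - c ^ (-(1 / (1 + t))) * n ^ q with hφ
  have hlin : HasDerivAt (fun t : ℝ => k * t) k 0 := by
    simpa using (hasDerivAt_id (0 : ℝ)).const_mul k
  have hinv : HasDerivAt (fun t : ℝ => -(1 / (1 + t))) 1 0 := by
    have := (((hasDerivAt_id (0 : ℝ)).const_add 1).fun_inv (by simp)).fun_neg
    simpa using this
  have hd := ((((hlin.const_add n).rpow_const (Or.inr hq.le)).const_mul c⁻¹).add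
    (hlin.rpow_const (Or.inr hq.le))).sub ((hinv.const_rpow hc).mul_const (n ^ q))
  have hd' : HasDerivAt φ (c⁻¹ * (k * q * n ^ (q - 1)) - Real.log c * c⁻¹ * n ^ q) 0 := by
    refine HasDerivAt.congr_deriv (f := φ) hd ?_
    have : (0 : ℝ) ^ (q - 1) = 0 := Real.zero_rpow (by linarith)
    simp [this, Real.rpow_neg_one]
  have hφ0 : φ 0 = 0 := by
    have : (0 : ℝ) ^ q = 0 := Real.zero_rpow (by linarith)
    simp [hφ, this, Real.rpow_neg_one]
  have hslope := (hasDerivWithinAt_iff_tendsto_slope' (s := Ioi 0) (by simp)).1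
    hd'.hasDerivWithinAt
  have hnn := ge_of_tendsto hslope (b := 0) (by
    filter_upwards [self_mem_nhdsWithin] with t ht
    rw [slope_def_field, hφ0, sub_zero, sub_zero]
    exact div_nonneg (sub_nonneg.2 (h t ht)) (le_of_lt ht))
  have hnq : n ^ q = n ^ (q - 1) * n := by
    rw [← Real.rpow_add_one hn.ne']
    simp
  have hfac : c⁻¹ * (k * q * n ^ (q - 1)) - Real.log c * c⁻¹ * n ^ q =
      c⁻¹ * n ^ (q - 1) * (k * q - n * Real.log c) := by
    rw [hnq]
    ring
  rw [hfac] at hnn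
  have := nonneg_of_mul_nonneg_right hnn (by positivity)
  rw [hqk] at this
  linarith

theorem rpow_le_mul_exp_of_le_add {a b r k t : ℝ} (ha : 0 ≤ a) (hk : 0 < k) (ht : 0 < t)
    (hab : a ≤ b + r) :
    a ^ k ≤ (b ^ 2 + k * t) ^ (k / 2) * Real.exp (r ^ 2 / (2 * t)) := by
  have hkt : 0 < k * t := mul_pos hk ht
  have h1 : a ^ 2 ≤ (b ^ 2 + k * t) * Real.exp (r ^ 2 / (k * t)) := by
    have h2 : r ^ 2 / (k * t) + 1 ≤ Real.exp (r ^ 2 / (k * t)) := Real.add_one_le_exp _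
    have h3 : (b + r) ^ 2 ≤ (b ^ 2 + k * t) * (r ^ 2 / (k * t) + 1) := by
      have h4 : (b ^ 2 + k * t) * (r ^ 2 / (k * t) + 1) - (b + r) ^ 2 =
          (b * r - k * t) ^ 2 / (k * t) := by
        field_simp
        ring
      have : 0 ≤ (b * r - k * t) ^ 2 / (k * t) := by positivity
      linarith
    calc a ^ 2 ≤ (b + r) ^ 2 := by gcongr
      _ ≤ _ := h3
      _ ≤ _ := by gcongr
  calc a ^ k = (a ^ 2) ^ (k / 2) := by
        rw [← Real.rpow_natCast a 2, ← Real.rpow_mul ha]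
        congr 1
        push_cast
        ring
    _ ≤ ((b ^ 2 + k * t) * Real.exp (r ^ 2 / (k * t))) ^ (k / 2) := by gcongr
    _ = _ := by
        rw [Real.mul_rpow (by positivity) (Real.exp_pos _).le, ← Real.exp_mul]
        congr 2
        field_simp

theorem lintegral_le_lintegral_rpow {α : Type*} [MeasurableSpace α] {μ : Measure α}
    [IsProbabilityMeasure μ] {g : α → ENNReal} (hg : Measurable g) {p : ℝ} (hp : 1 ≤ p) :
    ∫⁻ x, g x ∂μ ≤ (∫⁻ x, g x ^ p ∂μ) ^ (1 / p) := by
  simpa [eLpNorm'] using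
    eLpNorm'_le_eLpNorm'_of_exponent_le (f := g) zero_lt_one hp μ hg.aestronglyMeasurable

/-- A bounded function that is 1-Lipschitz for the `ℓ₂` norm and vanishes off a set of Gaussian
measure `1 / K` has conditional mean at most `k / √(2 log K)` on that set, for every `k > 2`. -/
theorem setLIntegral_le_of_lipschitz_of_bounded {d K : ℕ} (hK : 2 ≤ K) {B : Set (Fin d → ℝ)}
    (hB : MeasurableSet B) (hνB : _root_.stdGaussian d B = (K : ENNReal)⁻¹) {k : ℝ} (hk : 2 < k)
    {f : (Fin d → ℝ) → ℝ} (hfm : Measurable f) (hf0 : ∀ x, 0 ≤ f x) {R : ℝ} (hfR : ∀ x, f x ≤ R)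
    (hfB : ∀ x ∉ B, f x = 0) (hlip : ∀ x y, f x ≤ f y + l2 (x - y)) :
    ∫⁻ x in B, ENNReal.ofReal (f x) ∂(_root_.stdGaussian d) ≤
      (K : ENNReal)⁻¹ * ENNReal.ofReal (k / √(2 * Real.log K)) := by
  set ν := _root_.stdGaussian d
  have hk0 : 0 < k := by linarith
  have hR : 0 ≤ R := (hf0 0).trans (hfR 0)
  have hK0 : (K : ENNReal) ≠ 0 := by
    simp
    omega
  have hKt : (K : ENNReal) ≠ ⊤ := ENNReal.natCast_ne_top K
  have hKR : (0 : ℝ) < K := by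
    have : 0 < K := by omega
    exact_mod_cast this
  set μ : Measure (Fin d → ℝ) := (K : ENNReal) • ν.restrict B with hμ
  have hμp : IsProbabilityMeasure μ :=
    ⟨by simp [hμ, hνB, ENNReal.mul_inv_cancel hK0 hKt]⟩
  have hrestr : ∀ u : (Fin d → ℝ) → ENNReal,
      ∫⁻ x in B, u x ∂ν = (K : ENNReal)⁻¹ * ∫⁻ x, u x ∂μ := fun u => by
    rw [hμ, lintegral_smul_measure, smul_eq_mul, ← mul_assoc, ENNReal.inv_mul_cancel hK0 hKt,
      one_mul]
  set g : (Fin d → ℝ) → ENNReal := fun x => ENNReal.ofReal (f x) with hg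
  have hgm : Measurable g := hfm.ennreal_ofReal
  have hgpow : ∀ x, g x ^ k = ENNReal.ofReal (f x ^ k) := fun x =>
    ENNReal.ofReal_rpow_of_nonneg (hf0 x) hk0.le
  set I := ∫⁻ x, g x ^ k ∂μ with hI
  have hIt : I ≠ ⊤ := by
    refine ne_top_of_le_ne_top (b := ENNReal.ofReal (R ^ k)) ENNReal.ofReal_ne_top ?_
    calc I ≤ ∫⁻ _, ENNReal.ofReal (R ^ k) ∂μ := lintegral_mono fun x => by
          rw [hgpow]
          exact ENNReal.ofReal_le_ofReal (Real.rpow_le_rpow (hf0 x) (hfR x) hk0.le)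
      _ = _ := by simp
  set n := (I ^ (1 / (k / 2))).toReal with hn
  have hnI : ENNReal.ofReal n = I ^ (1 / (k / 2)) :=
    ENNReal.ofReal_toReal (ENNReal.rpow_ne_top_of_nonneg (by positivity) hIt)
  have hIn : I = ENNReal.ofReal (n ^ (k / 2)) := by
    rw [← ENNReal.ofReal_rpow_of_nonneg ENNReal.toReal_nonneg (by positivity), hnI,
      ← ENNReal.rpow_mul, one_div_mul_cancel (by positivity), ENNReal.rpow_one]
  have hn0 : 0 ≤ n := ENNReal.toReal_nonneg
  have main : n * Real.log K ≤ k ^ 2 / 2 := by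
    refine mul_log_le_of_forall_rpow_le hn0 hKR hk fun t ht => ?_
    have ht1 : 0 < 1 + t := by linarith
    have hkt : 0 < k * t := mul_pos hk0 ht
    set F : (Fin d → ℝ) → ENNReal := fun x => ENNReal.ofReal ((f x ^ 2 + k * t) ^ (k / 2)) with hF
    have hFm : Measurable F := by fun_prop
    set J := ∫⁻ x, F x ∂μ
    have hJn : J ≤ ENNReal.ofReal ((n + k * t) ^ (k / 2)) := by
      have hmink := ENNReal.lintegral_Lp_add_le (μ := μ) (p := k / 2)
        (f := fun x => ENNReal.ofReal (f x ^ 2)) (g := fun _ => ENNReal.ofReal (k * t))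
        (by fun_prop) (by fun_prop) (by linarith)
      have e1 : ∀ x, ((fun x => ENNReal.ofReal (f x ^ 2)) + fun _ => ENNReal.ofReal (k * t) :
          (Fin d → ℝ) → ENNReal) x ^ (k / 2) = F x := fun x => by
        rw [Pi.add_apply, ← ENNReal.ofReal_add (by positivity) hkt.le,
          ENNReal.ofReal_rpow_of_nonneg (by positivity) (by positivity)]
      have e2 : ∀ x, ENNReal.ofReal (f x ^ 2) ^ (k / 2) = g x ^ k := fun x => by
        rw [hg, ENNReal.ofReal_pow (hf0 x), ← ENNReal.rpow_natCast, ← ENNReal.rpow_mul]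
        congr 1
        push_cast
        ring
      simp only [e1, e2] at hmink
      rw [lintegral_const, measure_univ, mul_one, ← ENNReal.rpow_mul,
        mul_one_div_cancel (by positivity), ENNReal.rpow_one, ← hI, ← hnI,
        ← ENNReal.ofReal_add hn0 hkt.le] at hmink
      have := ENNReal.rpow_le_rpow hmink (show 0 ≤ k / 2 by positivity)
      rwa [← ENNReal.rpow_mul, one_div_mul_cancel (by positivity), ENNReal.rpow_one,
        ENNReal.ofReal_rpow_of_nonneg (by positivity) (by positivity)] at this
    have hhyper := lintegral_rpow_stdGaussian_le ht
      (M := ENNReal.ofReal ((R ^ 2 + k * t) ^ (k / 2)))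
      ENNReal.ofReal_ne_top d (F := F) (G := fun x => g x ^ k) hFm (hgm.pow_const _)
      (fun x => ?_) (fun x => ?_) (fun x y => ?_)
    · have hlow : (K : ENNReal)⁻¹ * I ^ (1 + t) ≤ ∫⁻ x, (g x ^ k) ^ (1 + t) ∂ν := by
        calc (K : ENNReal)⁻¹ * I ^ (1 + t)
            ≤ (K : ENNReal)⁻¹ * ∫⁻ x, (g x ^ k) ^ (1 + t) ∂μ := by
              gcongr
              have := lintegral_le_lintegral_rpow (μ := μ) (hgm.pow_const k)
                (show 1 ≤ 1 + t by linarith)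
              have := ENNReal.rpow_le_rpow this ht1.le
              rwa [← ENNReal.rpow_mul, one_div_mul_cancel ht1.ne', ENNReal.rpow_one] at this
          _ = ∫⁻ x in B, (g x ^ k) ^ (1 + t) ∂ν := (hrestr _).symm
          _ ≤ _ := setLIntegral_le_lintegral _ _
      have hupp : ∫⁻ x, F x ∂ν ≤ (K : ENNReal)⁻¹ * J + ENNReal.ofReal ((k * t) ^ (k / 2)) := by
        rw [← lintegral_add_compl F hB, hrestr]
        gcongr
        calc ∫⁻ x in Bᶜ, F x ∂ν = ∫⁻ x in Bᶜ, ENNReal.ofReal ((k * t) ^ (k / 2)) ∂ν :=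
              setLIntegral_congr_fun hB.compl fun x hx => by simp [hF, hfB x hx]
          _ ≤ ∫⁻ x, ENNReal.ofReal ((k * t) ^ (k / 2)) ∂ν := setLIntegral_le_lintegral _ _
          _ = _ := by simp [ν]
      have hcomb : (K : ENNReal)⁻¹ * I ^ (1 + t) ≤
          ((K : ENNReal)⁻¹ * ENNReal.ofReal ((n + k * t) ^ (k / 2)) +
            ENNReal.ofReal ((k * t) ^ (k / 2))) ^ (1 + t) :=
        hlow.trans (hhyper.trans (ENNReal.rpow_le_rpow (hupp.trans (by gcongr)) ht1.le))
      have hKinv : (K : ENNReal)⁻¹ = ENNReal.ofReal (K : ℝ)⁻¹ := by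
        rw [ENNReal.ofReal_inv_of_pos hKR, ENNReal.ofReal_natCast]
      have hcomb' := ENNReal.rpow_le_rpow hcomb (show 0 ≤ 1 / (1 + t) by positivity)
      rw [← ENNReal.rpow_mul, mul_one_div_cancel ht1.ne', ENNReal.rpow_one,
        ENNReal.mul_rpow_of_nonneg _ _ (by positivity), ← ENNReal.rpow_mul,
        mul_one_div_cancel ht1.ne', ENNReal.rpow_one, hIn, hKinv,
        ENNReal.ofReal_rpow_of_nonneg (by positivity) (by positivity),
        ← ENNReal.ofReal_mul (by positivity), ← ENNReal.ofReal_mul (by positivity),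
        ← ENNReal.ofReal_add (by positivity) (by positivity),
        ENNReal.ofReal_le_ofReal_iff (by positivity), Real.inv_rpow hKR.le,
        ← Real.rpow_neg hKR.le] at hcomb'
      exact hcomb'
    · refine ENNReal.ofReal_le_ofReal (Real.rpow_le_rpow (by positivity) ?_ (by positivity))
      have := hf0 x
      have := hfR x
      gcongr
    · rw [hgpow]
      refine ENNReal.ofReal_le_ofReal ?_
      have := rpow_le_mul_exp_of_le_add (hf0 x) hk0 ht (r := 0) (by simpa using hfR x)
      simpa using this
    · rw [hgpow, ← ENNReal.ofReal_mul (by positivity)]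
      refine ENNReal.ofReal_le_ofReal ?_
      have := rpow_le_mul_exp_of_le_add (hf0 x) hk0 ht (hlip x y)
      rwa [l2, Real.sq_sqrt (Finset.sum_nonneg fun i _ => sq_nonneg _)] at this
  rw [hrestr]
  gcongr
  have hlog : 0 < Real.log K := Real.log_pos (by exact_mod_cast hK)
  calc ∫⁻ x, g x ∂μ ≤ I ^ (1 / k) := lintegral_le_lintegral_rpow hgm (by linarith)
    _ = ENNReal.ofReal √n := by
      rw [hIn, ENNReal.ofReal_rpow_of_nonneg (by positivity) (by positivity), ← Real.rpow_mul hn0,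
        Real.sqrt_eq_rpow]
      congr 2
      field_simp
    _ ≤ ENNReal.ofReal (k / √(2 * Real.log K)) := by
      refine ENNReal.ofReal_le_ofReal ?_
      rw [le_div_iff₀ (by positivity), ← Real.sqrt_mul hn0]
      refine (Real.sqrt_le_left hk0.le).2 ?_
      linarith

theorem l2_eq_norm {d : ℕ} (z : Fin d → ℝ) : l2 z = ‖WithLp.toLp 2 z‖ := by
  simp [l2, EuclideanSpace.norm_eq]

theorem distSet_nonneg {d : ℕ} (z : Fin d → ℝ) (A : Set (Fin d → ℝ)) : 0 ≤ distSet z A :=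
  Real.sInf_nonneg fun _ ⟨_, _, h⟩ => h ▸ Real.sqrt_nonneg _

theorem distSet_le_l2 {d : ℕ} (z : Fin d → ℝ) {A : Set (Fin d → ℝ)} {w : Fin d → ℝ} (hw : w ∈ A) :
    distSet z A ≤ l2 (z - w) :=
  csInf_le ⟨0, fun _ ⟨_, _, h⟩ => h ▸ Real.sqrt_nonneg _⟩ ⟨w, hw, rfl⟩

theorem distSet_eq_zero_of_mem {d : ℕ} {z : Fin d → ℝ} {A : Set (Fin d → ℝ)} (hz : z ∈ A) :
    distSet z A = 0 :=
  le_antisymm (by simpa [l2] using distSet_le_l2 z hz) (distSet_nonneg z A)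

theorem distSet_le_distSet_add {d : ℕ} {A : Set (Fin d → ℝ)} (hA : A.Nonempty)
    (x y : Fin d → ℝ) : distSet x A ≤ distSet y A + l2 (x - y) := by
  rw [← sub_le_iff_le_add]
  refine le_csInf ?_ ?_
  · obtain ⟨w, hw⟩ := hA
    exact ⟨_, w, hw, rfl⟩
  · rintro _ ⟨w, hw, rfl⟩
    have h1 := distSet_le_l2 x hw
    have h2 : l2 (x - w) ≤ l2 (x - y) + l2 (y - w) := by
      simp only [l2_eq_norm, WithLp.toLp_sub]
      exact norm_sub_le_norm_sub_add_norm_sub _ _ _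
    linarith

theorem measurable_distSet {d : ℕ} {A : Set (Fin d → ℝ)} (hA : A.Nonempty) :
    Measurable fun x => distSet x A := by
  have h : LipschitzWith 1 fun x : EuclideanSpace ℝ (Fin d) => distSet x.ofLp A :=
    LipschitzWith.of_le_add fun x y => by
      have := distSet_le_distSet_add hA x.ofLp y.ofLp
      rwa [l2_eq_norm, WithLp.toLp_sub, WithLp.toLp_ofLp, WithLp.toLp_ofLp, ← dist_eq_norm] at this
  exact (h.continuous.comp (PiLp.continuous_toLp 2 fun _ : Fin d => ℝ)).measurable

/-- The conditional mean, on a set of Gaussian measure `1 / K`, of the distance to the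
complement. -/
theorem setLIntegral_distSet_compl_le {d K : ℕ} (hK : 2 ≤ K) {B : Set (Fin d → ℝ)}
    (hB : MeasurableSet B) (hνB : _root_.stdGaussian d B = (K : ENNReal)⁻¹) {k : ℝ} (hk : 2 < k) :
    ∫⁻ x in B, ENNReal.ofReal (distSet x Bᶜ) ∂(_root_.stdGaussian d) ≤
      (K : ENNReal)⁻¹ * ENNReal.ofReal (k / √(2 * Real.log K)) := by
  have hne : Bᶜ.Nonempty := by
    rw [Set.nonempty_compl]
    rintro rfl
    rw [measure_univ, eq_comm, ENNReal.inv_eq_one, Nat.cast_eq_one] at hνB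
    omega
  have hm := measurable_distSet hne
  have hlim := lintegral_tendsto_of_tendsto_of_monotone
    (μ := (_root_.stdGaussian d).restrict B)
    (f := fun (m : ℕ) x => ENNReal.ofReal (min (distSet x Bᶜ) m))
    (F := fun x => ENNReal.ofReal (distSet x Bᶜ)) (fun m => by fun_prop)
    (Filter.Eventually.of_forall fun x a b hab => by
      dsimp only
      gcongr)
    (Filter.Eventually.of_forall fun x => by
      obtain ⟨m, hm⟩ := exists_nat_ge (distSet x Bᶜ)
      refine tendsto_const_nhds.congr' ?_
      filter_upwards [Filter.eventually_ge_atTop m] with a ha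
      rw [min_eq_left (hm.trans (by exact_mod_cast ha))])
  refine le_of_tendsto' hlim fun m => ?_
  refine setLIntegral_le_of_lipschitz_of_bounded hK hB hνB hk (R := m) (by fun_prop)
    (fun x => le_min (distSet_nonneg _ _) (Nat.cast_nonneg m)) (fun x => min_le_right _ _)
    (fun x hx => ?_) (fun x y => ?_)
  · rw [distSet_eq_zero_of_mem (Set.mem_compl hx)]
    simp
  · rw [min_add]
    exact min_le_min (distSet_le_distSet_add hne x y)
      (le_add_of_nonneg_right (Real.sqrt_nonneg _))

theorem five_halves_le_log_mul_log {K : ℕ} (hK : 5 ≤ K) :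
    5 / 2 ≤ Real.log (4 * π * Real.log K) := by
  have hK' : (5 : ℝ) ≤ K := by exact_mod_cast hK
  have hlog : 1.2 ≤ Real.log K := by
    rw [Real.le_log_iff_exp_le (by linarith)]
    refine le_trans ?_ hK'
    have h1 : Real.exp 1.2 ^ 5 = Real.exp 1 ^ 6 := by
      rw [← Real.exp_nat_mul, ← Real.exp_nat_mul]
      norm_num
    have h2 : Real.exp 1 ^ 6 ≤ 2.7182818286 ^ 6 := by
      gcongr
      exact Real.exp_one_lt_d9.le
    refine le_of_pow_le_pow_left₀ (n := 5) (by norm_num) (by norm_num) ?_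
    rw [h1]
    exact h2.trans (by norm_num)
  have hpos : 14 ≤ 4 * π * Real.log K := by nlinarith [Real.pi_gt_three]
  rw [Real.le_log_iff_exp_le (by linarith)]
  refine le_trans ?_ hpos
  have h1 : Real.exp (5 / 2) ^ 2 = Real.exp 1 ^ 5 := by
    rw [← Real.exp_nat_mul, ← Real.exp_nat_mul]
    norm_num
  have h2 : Real.exp 1 ^ 5 ≤ 2.7182818286 ^ 5 := by
    gcongr
    exact Real.exp_one_lt_d9.le
  refine le_of_pow_le_pow_left₀ (n := 2) (by norm_num) (by norm_num) ?_
  rw [h1]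
  exact h2.trans (by norm_num)

/-- Explicit bound on the expected latent-space robustness for `K ≥ 5` equiprobable
cells (Theorem 4). -/
theorem expected_latent_robustness_bound_equiprobable (d K : ℕ) (hK : 5 ≤ K)
    (B : Fin K → Set (Fin d → ℝ))
    (hmeas : ∀ i, MeasurableSet (B i))
    (hdisj : Pairwise (Function.onFun Disjoint B))
    (hcover : (⋃ i, B i) = Set.univ)
    (hprob : ∀ i, ((stdGaussian d) (B i)).toReal = 1 / (K : ℝ)) :
    (∫ z, distSet z {z' | ∀ i, z ∈ B i → z' ∉ B i} ∂(stdGaussian d)) ≤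
      Real.log (4 * π * Real.log K) / Real.sqrt (2 * Real.log K) := by
  set ν := _root_.stdGaussian d
  set A : (Fin d → ℝ) → Set (Fin d → ℝ) := fun z => {z' | ∀ i, z ∈ B i → z' ∉ B i}
  set C := Real.log (4 * π * Real.log K) / Real.sqrt (2 * Real.log K)
  have hC : 5 / 2 / √(2 * Real.log K) ≤ C :=
    div_le_div_of_nonneg_right (five_halves_le_log_mul_log hK) (Real.sqrt_nonneg _)
  have hC0 : 0 ≤ C := le_trans (by positivity) hC
  have hA : ∀ i, ∀ z ∈ B i, A z = (B i)ᶜ := by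
    intro i z hz
    ext w
    refine ⟨fun h => h i hz, fun h j hj => ?_⟩
    have : j = i := by
      by_contra hne
      exact Set.disjoint_left.1 (hdisj hne) hj hz
    rwa [this]
  have hKR : (0 : ℝ) < K := by
    have : 0 < K := by omega
    exact_mod_cast this
  have hK0 : (K : ENNReal) ≠ 0 := by
    simp
    omega
  have hν : ∀ i, ν (B i) = (K : ENNReal)⁻¹ := fun i => by
    rw [← ENNReal.ofReal_toReal (measure_ne_top ν (B i)), hprob i, one_div,
      ENNReal.ofReal_inv_of_pos hKR, ENNReal.ofReal_natCast]
  have hbound : ∫⁻ z, ENNReal.ofReal (distSet z (A z)) ∂ν ≤ ENNReal.ofReal C := by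
    rw [← setLIntegral_univ, ← hcover, lintegral_iUnion hmeas hdisj, tsum_fintype]
    calc ∑ i, ∫⁻ z in B i, ENNReal.ofReal (distSet z (A z)) ∂ν
        ≤ ∑ _i : Fin K, (K : ENNReal)⁻¹ * ENNReal.ofReal C := by
          refine Finset.sum_le_sum fun i _ => ?_
          rw [setLIntegral_congr_fun (g := fun z => ENNReal.ofReal (distSet z (B i)ᶜ)) (hmeas i)
            fun z hz => by simp only [hA i z hz]]
          exact (setLIntegral_distSet_compl_le (by omega) (hmeas i) (hν i)
            (by norm_num : (2 : ℝ) < 5 / 2)).trans (by gcongr)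
      _ = ENNReal.ofReal C := by
          rw [Finset.sum_const, Finset.card_univ, Fintype.card_fin, nsmul_eq_mul, ← mul_assoc,
            ENNReal.mul_inv_cancel hK0 (ENNReal.natCast_ne_top K), one_mul]
  by_cases hint : Integrable (fun z => distSet z (A z)) ν
  · rw [← ofReal_integral_eq_lintegral_ofReal hint
      (Filter.Eventually.of_forall fun z => distSet_nonneg _ _)] at hbound
    exact (ENNReal.ofReal_le_ofReal_iff hC0).1 hbound
  · rw [integral_undef hint]
    exact hC0
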